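/- Let v*, w, and v_i (i ∈ I, i ≠ s) and u_k (k ∈ K) be vectors in ℝ^d, let α : I → ℝ with Σ_{i∈I} α_i = 1 and 0 < α_s < 1, let β : K → ℝ with Σ_{k∈K} β_k = 1, and let θ_d > θ, p ∈ [0, 1), ψ_s, ψ ∈ ℝ. Assume ⟨v*, v*⟩ = θ_d; ⟨v*, v_i⟩ = θ for all i ≠ s; ⟨v*, u_k⟩ = θ for all k; ⟨v*, w⟩ = ψ_s; and ⟨v_i, w⟩ = ψ for all i ≠ s. Put v̂_1 = α_s·v* + Σ_{i≠s} α_i·v_i and v̂_0 = Σ_k β_k·u_k, and define the attention-parameter update direction E = (1−p)·[α_s·⟨v*, w⟩·(v* − v̂_1) + Σ_{i≠s} α_i·⟨v_i, w⟩·(v_i − v̂_1)] − p·Σ_k β_k·⟨u_k, w⟩·(u_k − v̂_0). Then ⟨v*, E⟩ = (1−p)·α_s·(1−α_s)·(ψ_s − ψ)·(θ_d − θ); in particular, if ψ_s > ψ then ⟨v*, E⟩ > 0. -/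

import Mathlib

open scoped RealInnerProductSpace

/-!
Pairing an attention gradient with a direction `a` gives the covariance, under the attention
weights, of `⟪a, x i⟫` and `⟪x i, w⟫`. On the label-0 graph the first variable is constant, so the
covariance vanishes; on the label-1 graph both variables are constant off the special node `s`, and
the covariance is `α s * (1 - α s)` times the product of their two jumps at `s`.
-/

section Attention

open Finset Function

variable {ι F : Type*} [Fintype ι] [SeminormedAddCommGroup F] [InnerProductSpace ℝ F]

/-- The pooled representation of a graph whose node representations `x i` carry attention
weights `α i`; the weights are not required to be normalized. -/
def attentionPool (α : ι → ℝ) (x : ι → F) : F :=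
  ∑ i, α i • x i

/-- The gradient of the class score `⟪attentionPool α x, w⟫` with respect to the attention
parameter `a`, for softmax attention `α i ∝ exp ⟪a, x i⟫`. The weights are kept as free variables,
and the parameter they come from does not appear. -/
noncomputable def attentionGradient (α : ι → ℝ) (x : ι → F) (w : F) : F :=
  ∑ i, (α i * ⟪x i, w⟫) • (x i - attentionPool α x)

theorem inner_attentionPool_left (α : ι → ℝ) (x : ι → F) (w : F) :
    ⟪attentionPool α x, w⟫ = ∑ i, α i * ⟪x i, w⟫ := by
  simp only [attentionPool, sum_inner, real_inner_smul_left]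

theorem inner_attentionPool_right (α : ι → ℝ) (x : ι → F) (a : F) :
    ⟪a, attentionPool α x⟫ = ∑ i, α i * ⟪a, x i⟫ := by
  simp only [attentionPool, inner_sum, real_inner_smul_right]

theorem inner_attentionPool_left_of_forall_ne {α : ι → ℝ} (hα : ∑ i, α i = 1) {x : ι → F} {w : F}
    {s : ι} {ψ : ℝ} (hψ : ∀ i, i ≠ s → ⟪x i, w⟫ = ψ) :
    ⟪attentionPool α x, w⟫ = α s * ⟪x s, w⟫ + (1 - α s) * ψ := by
  have jump : ∑ i, α i * (⟪x i, w⟫ - ψ) = α s * (⟪x s, w⟫ - ψ) :=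
    Fintype.sum_eq_single s fun i hi => by rw [hψ i hi, sub_self, mul_zero]
  simp only [mul_sub, sum_sub_distrib, ← sum_mul, hα] at jump
  rw [inner_attentionPool_left]
  linarith

theorem inner_attentionGradient (α : ι → ℝ) (x : ι → F) (a w : F) :
    ⟪a, attentionGradient α x w⟫ =
      ∑ i, α i * ⟪a, x i⟫ * ⟪x i, w⟫ - ⟪a, attentionPool α x⟫ * ⟪attentionPool α x, w⟫ := by
  rw [inner_attentionPool_left, mul_sum, ← sum_sub_distrib]
  simp only [attentionGradient, inner_sum, real_inner_smul_right, inner_sub_right]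
  exact sum_congr rfl fun i _ => by ring

theorem inner_attentionGradient_eq_sum_sub {α : ι → ℝ} (hα : ∑ i, α i = 1) (x : ι → F)
    (a w : F) (θ : ℝ) :
    ⟪a, attentionGradient α x w⟫ =
      ∑ i, α i * (⟪a, x i⟫ - θ) * (⟪x i, w⟫ - ⟪attentionPool α x, w⟫) := by
  have expand : ∀ i, α i * (⟪a, x i⟫ - θ) * (⟪x i, w⟫ - ⟪attentionPool α x, w⟫) =
      α i * ⟪a, x i⟫ * ⟪x i, w⟫ - α i * ⟪a, x i⟫ * ⟪attentionPool α x, w⟫ -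
        (α i * ⟪x i, w⟫ * θ - α i * (θ * ⟪attentionPool α x, w⟫)) := fun i => by ring
  simp only [expand, sum_sub_distrib, ← sum_mul, ← inner_attentionPool_left,
    ← inner_attentionPool_right, hα, inner_attentionGradient]
  ring

theorem inner_attentionGradient_eq_zero {α : ι → ℝ} (hα : ∑ i, α i = 1) {x : ι → F} {a : F}
    (w : F) {θ : ℝ} (hθ : ∀ i, ⟪a, x i⟫ = θ) : ⟪a, attentionGradient α x w⟫ = 0 := by
  simp [inner_attentionGradient_eq_sum_sub hα x a w θ, hθ]

theorem inner_attentionGradient_of_forall_ne {α : ι → ℝ} (hα : ∑ i, α i = 1) {x : ι → F} {a : F}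
    (w : F) {s : ι} {θ : ℝ} (hθ : ∀ i, i ≠ s → ⟪a, x i⟫ = θ) :
    ⟪a, attentionGradient α x w⟫ =
      α s * (⟪a, x s⟫ - θ) * (⟪x s, w⟫ - ⟪attentionPool α x, w⟫) := by
  rw [inner_attentionGradient_eq_sum_sub hα x a w θ]
  exact Fintype.sum_eq_single s fun i hi => by rw [hθ i hi, sub_self, mul_zero, zero_mul]

section Update

variable [DecidableEq ι]

theorem sum_apply_update {M N : Type*} [AddCommMonoid N] (f : ι → M → N) (v : ι → M) (s : ι)
    (a : M) : ∑ i, f i (update v s a i) = f s a + ∑ i ∈ univ.erase s, f i (v i) := by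
  rw [← add_sum_erase univ _ (mem_univ s), update_self]
  congr 1
  exact sum_congr rfl fun i hi => by rw [update_of_ne (ne_of_mem_erase hi)]

theorem attentionPool_update (α : ι → ℝ) (v : ι → F) (s : ι) (a : F) :
    attentionPool α (update v s a) = α s • a + ∑ i ∈ univ.erase s, α i • v i :=
  sum_apply_update (fun i y => α i • y) v s a

theorem attentionGradient_update (α : ι → ℝ) (v : ι → F) (s : ι) (a w : F) :
    attentionGradient α (update v s a) w =
      (α s * ⟪a, w⟫) • (a - attentionPool α (update v s a)) +
        ∑ i ∈ univ.erase s, (α i * ⟪v i, w⟫) • (v i - attentionPool α (update v s a)) :=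
  sum_apply_update (fun i y => (α i * ⟪y, w⟫) • (y - attentionPool α (update v s a))) v s a

end Update

/-- By `hψ`, the number `ψ` is the attention-weighted mean of the `⟪x i, w⟫` over the nodes other
than `s`. -/
theorem orientation_of_a_parameter_general {κ : Type*} [Fintype κ] {x : ι → F} {u : κ → F}
    {a w : F} {s : ι} {α : ι → ℝ} {β : κ → ℝ} {θ θ₀ p ψ : ℝ}
    (hα : ∑ i, α i = 1) (hαs0 : 0 < α s) (hαs1 : α s < 1) (hβ : ∑ k, β k = 1) (hp : p < 1)
    (hs : θ < ⟪a, x s⟫) (hx : ∀ i, i ≠ s → ⟪a, x i⟫ = θ) (hu : ∀ k, ⟪a, u k⟫ = θ₀)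
    (hψ : ⟪attentionPool α x, w⟫ = α s * ⟪x s, w⟫ + (1 - α s) * ψ) :
    ⟪a, (1 - p) • attentionGradient α x w - p • attentionGradient β u w⟫ =
        (1 - p) * α s * (1 - α s) * (⟪x s, w⟫ - ψ) * (⟪a, x s⟫ - θ) ∧
      (ψ < ⟪x s, w⟫ →
        0 < ⟪a, (1 - p) • attentionGradient α x w - p • attentionGradient β u w⟫) := by
  have formula : ⟪a, (1 - p) • attentionGradient α x w - p • attentionGradient β u w⟫ =
      (1 - p) * α s * (1 - α s) * (⟪x s, w⟫ - ψ) * (⟪a, x s⟫ - θ) := by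
    rw [inner_sub_right, real_inner_smul_right, real_inner_smul_right,
      inner_attentionGradient_of_forall_ne hα w hx, inner_attentionGradient_eq_zero hβ w hu, hψ]
    ring
  refine ⟨formula, fun hlt => ?_⟩
  rw [formula]
  exact mul_pos (mul_pos (mul_pos (mul_pos (sub_pos.2 hp) hαs0) (sub_pos.2 hαs1)) (sub_pos.2 hlt))
    (sub_pos.2 hs)

end Attention

/-- core of 'Orientation of the `a` parameter': with the stated inner
products, pooled vectors `v̂₁ = α s • v* + ∑_{i≠s} α i • v i` and `v̂₀ = ∑ k, β k • u k`,
the attention update direction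
`E = (1−p) • [α s·⟪v*,w⟫ • (v* − v̂₁) + ∑_{i≠s} α i·⟪v i,w⟫ • (v i − v̂₁)]
      − p • ∑ k, β k·⟪u k,w⟫ • (u k − v̂₀)`
satisfies `⟪v*, E⟫ = (1−p)·α s·(1−α s)·(ψ_s − ψ)·(θ_d − θ)`; in particular if
`ψ_s > ψ` then `⟪v*, E⟫ > 0`. -/
theorem orientation_of_a_parameter {I K : Type*} [Fintype I] [Fintype K] [DecidableEq I]
    (d : ℕ) (s : I) (vstar w : EuclideanSpace ℝ (Fin d))
    (v : I → EuclideanSpace ℝ (Fin d)) (u : K → EuclideanSpace ℝ (Fin d))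
    (α : I → ℝ) (β : K → ℝ) (θd θ p ψs ψ : ℝ)
    (hα1 : ∑ i, α i = 1) (hαs0 : 0 < α s) (hαs1 : α s < 1)
    (hβ1 : ∑ k, β k = 1)
    (hθ : θ < θd) (hp0 : 0 ≤ p) (hp1 : p < 1)
    (hself : ⟪vstar, vstar⟫ = θd)
    (hcrossv : ∀ i, i ≠ s → ⟪vstar, v i⟫ = θ)
    (hcrossu : ∀ k, ⟪vstar, u k⟫ = θ)
    (hψs : ⟪vstar, w⟫ = ψs)
    (hψ : ∀ i, i ≠ s → ⟪v i, w⟫ = ψ) :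
    ∀ vhat1 vhat0 E : EuclideanSpace ℝ (Fin d),
      vhat1 = α s • vstar + ∑ i ∈ Finset.univ.erase s, α i • v i →
      vhat0 = ∑ k, β k • u k →
      E = (1 - p) • ((α s * ⟪vstar, w⟫) • (vstar - vhat1) +
            ∑ i ∈ Finset.univ.erase s, (α i * ⟪v i, w⟫) • (v i - vhat1)) -
          p • (∑ k, (β k * ⟪u k, w⟫) • (u k - vhat0)) →
      ⟪vstar, E⟫ = (1 - p) * α s * (1 - α s) * (ψs - ψ) * (θd - θ) ∧
        (ψ < ψs → 0 < ⟪vstar, E⟫) := by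
  rintro _ _ _ rfl rfl rfl
  subst hself hψs
  have key := orientation_of_a_parameter_general (x := Function.update v s vstar) hα1 hαs0 hαs1
    hβ1 hp1 (by rwa [Function.update_self])
    (fun i hi => by rw [Function.update_of_ne hi, hcrossv i hi]) hcrossu
    (inner_attentionPool_left_of_forall_ne hα1 fun i hi => by
      rw [Function.update_of_ne hi, hψ i hi])
  rwa [Function.update_self, attentionGradient_update, attentionPool_update] at key
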